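/- Let K be a field of characteristic zero, let G be a finite group acting K-linearly on a finite-dimensional K-vector space W, and set t = |G|. Let r ≥ s ≥ t be positive integers. Let G act on W ⊗ K^r via the first factor (trivially on K^r) and let GL_r(K) act on W ⊗ K^r via the second factor, so both induce degree-preserving algebra automorphisms of the exterior algebra Λ(W ⊗ K^r), and the two actions commute. Regard Λ(W ⊗ K^s) as a subalgebra of Λ(W ⊗ K^r) via the standard inclusion K^s ↪ K^r (onto the first s coordinates). If S ⊆ Λ(W ⊗ K^s)^G generates Λ(W ⊗ K^s)^G as a K-algebra, then the polarized set { B · f : f ∈ S, B ∈ GL_r(K) } generates Λ(W ⊗ K^r)^G as a K-algebra. (Polarization for the exterior algebra.) -/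

import Mathlib

/-- The action of `g ∈ G` on `Λ(W ⊗ K^m)` induced by the action on the first
tensor factor. -/
noncomputable def extGAct (K : Type*) [Field K] {G : Type*} [Group G]
    {W : Type*} [AddCommGroup W] [Module K W] (ρ : Representation K G W)
    (m : ℕ) (g : G) :
    ExteriorAlgebra K (TensorProduct K W (Fin m → K)) →ₐ[K]
      ExteriorAlgebra K (TensorProduct K W (Fin m → K)) :=
  ExteriorAlgebra.map (TensorProduct.map (ρ g) LinearMap.id)

/-- The action of `B ∈ GL_m(K)` on `Λ(W ⊗ K^m)` induced by the natural action
on the second tensor factor. -/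
noncomputable def extGLAct (K : Type*) [Field K]
    (W : Type*) [AddCommGroup W] [Module K W]
    (m : ℕ) (B : Matrix.GeneralLinearGroup (Fin m) K) :
    ExteriorAlgebra K (TensorProduct K W (Fin m → K)) →ₐ[K]
      ExteriorAlgebra K (TensorProduct K W (Fin m → K)) :=
  ExteriorAlgebra.map
    (TensorProduct.map LinearMap.id (Matrix.toLin' (B : Matrix (Fin m) (Fin m) K)))

/-- The standard inclusion `K^s ↪ K^r` (`s ≤ r`), onto the first `s`
coordinates. -/
noncomputable def stdIncl (K : Type*) [Field K] (s r : ℕ) (h : s ≤ r) :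
    (Fin s → K) →ₗ[K] (Fin r → K) :=
  ∑ i : Fin s, LinearMap.smulRight (LinearMap.proj i) (Pi.single (Fin.castLE h i) (1 : K))

/-- The induced algebra embedding `Λ(W ⊗ K^s) → Λ(W ⊗ K^r)`. -/
noncomputable def extIncl (K : Type*) [Field K]
    (W : Type*) [AddCommGroup W] [Module K W] (s r : ℕ) (h : s ≤ r) :
    ExteriorAlgebra K (TensorProduct K W (Fin s → K)) →ₐ[K]
      ExteriorAlgebra K (TensorProduct K W (Fin r → K)) :=
  ExteriorAlgebra.map (TensorProduct.map LinearMap.id (stdIncl K s r h))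


section NoetherPart

variable {K : Type*} [Field K] {G : Type*} [Group G] [Fintype G]
  {E : Type*} [Ring E] [Algebra K E]

/-- The transfer. -/
noncomputable def trE (σ : G → E →ₐ[K] E) : E →ₗ[K] E := ∑ g : G, (σ g).toLinearMap

theorem trE_apply (σ : G → E →ₐ[K] E) (x : E) : trE σ x = ∑ g : G, σ g x := by
  simp [trE]

theorem act_trE (σ : G → E →ₐ[K] E) (hm : ∀ g h x, σ (g * h) x = σ g (σ h x)) (g : G) (x : E) :
    σ g (trE σ x) = trE σ x := by
  rw [trE_apply, map_sum]
  simp_rw [← hm]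
  exact Fintype.sum_equiv (Equiv.mulLeft g) _ _ (fun _ => rfl)

theorem trE_mul (σ : G → E →ₐ[K] E) (hm : ∀ g h x, σ (g * h) x = σ g (σ h x)) (x y : E) :
    trE σ (trE σ x * y) = trE σ x * trE σ y := by
  rw [trE_apply σ (trE σ x * y), trE_apply σ y, Finset.mul_sum]
  simp_rw [map_mul, act_trE σ hm]

/-- The space of mixed terms. -/
def mixM (K : Type*) [Field K] {G : Type*} {E : Type*} [Ring E] [Algebra K E]
    (σ : G → E →ₐ[K] E) (V : Set E) (n : ℕ) : Submodule K (G → E) :=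
  Submodule.span K {F | ∃ l₁ l₂ : List E, (∀ v ∈ l₁, v ∈ V) ∧ (∀ v ∈ l₂, v ∈ V) ∧
    1 ≤ l₁.length ∧ l₁.length + l₂.length = n ∧ F = fun h => σ h l₁.prod * l₂.prod}

theorem anti_prod (V : Set E) (hV : ∀ a ∈ V, ∀ b ∈ V, a * b = -(b * a)) (a : E) (ha : a ∈ V)
    (l : List E) (hl : ∀ v ∈ l, v ∈ V) : l.prod * a = ((-1 : K) ^ l.length) • (a * l.prod) := by
  induction l with
  | nil => simp
  | cons b l ih =>
    have hb := hV b (hl b (by simp)) a ha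
    rw [List.prod_cons, mul_assoc, ih (fun v hv => hl v (by simp [hv])), mul_smul_comm,
      ← mul_assoc, hb, List.length_cons, pow_succ]
    simp [mul_assoc]

theorem expand_mem (σ : G → E →ₐ[K] E) (hm : ∀ g h x, σ (g * h) x = σ g (σ h x))
    (V : Set E) (hV : ∀ a ∈ V, ∀ b ∈ V, a * b = -(b * a)) (hσ : ∀ g, ∀ v ∈ V, σ g v ∈ V)
    (L : List (G × E)) (hL : ∀ p ∈ L, p.2 ∈ V) :
    (fun h : G => (L.map (fun p => p.2 - σ (h * p.1) p.2)).prod - (L.map Prod.snd).prod)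
      ∈ mixM K σ V L.length := by
  induction L using List.reverseRecOn with
  | nil => simp; exact Submodule.zero_mem _
  | append_singleton L p ih =>
    have ih := ih (fun q hq => hL q (by simp [hq]))
    have hp : p.2 ∈ V := hL p (by simp)
    have hgp := hσ p.1 _ hp
    have hLV : ∀ v ∈ L.map Prod.snd, v ∈ V := by
      intro v hv
      obtain ⟨q, hq, rfl⟩ := List.mem_map.1 hv
      exact hL q (by simp [hq])
    have key : ∀ F ∈ mixM K σ V L.length,
        (fun h => F h * (p.2 - σ (h * p.1) p.2)) ∈ mixM K σ V (L.length + 1) := by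
      intro F hF
      induction hF using Submodule.span_induction with
      | mem F hF =>
        obtain ⟨l₁, l₂, h1, h2, h3, h4, rfl⟩ := hF
        have : (fun h => σ h l₁.prod * l₂.prod * (p.2 - σ (h * p.1) p.2)) =
          (fun h => σ h l₁.prod * (l₂ ++ [p.2]).prod) -
          ((-1 : K) ^ l₂.length) • (fun h => σ h (l₁ ++ [σ p.1 p.2]).prod * l₂.prod) := by
          funext h
          simp only [Pi.sub_apply, Pi.smul_apply, List.prod_append, List.prod_singleton, map_mul,
            mul_sub, mul_assoc, hm]
          rw [anti_prod (K := K) V hV _ (hσ h _ hgp) l₂ h2]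
          simp
        rw [this]
        refine Submodule.sub_mem _ (Submodule.subset_span ?_)
          (Submodule.smul_mem _ _ (Submodule.subset_span ?_))
        · refine ⟨l₁, l₂ ++ [p.2], h1, ?_, h3, ?_, rfl⟩
          · intro v hv
            rcases List.mem_append.1 hv with hv | hv
            · exact h2 v hv
            · simp at hv; rw [hv]; exact hp
          · simp; omega
        · refine ⟨l₁ ++ [σ p.1 p.2], l₂, ?_, h2, ?_, ?_, rfl⟩
          · intro v hv
            rcases List.mem_append.1 hv with hv | hv
            · exact h1 v hv
            · simp at hv; rw [hv]; exact hgp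
          · simp
          · simp; omega
      | zero => simp; exact Submodule.zero_mem _
      | add F F' _ _ h1 h2 =>
        have := Submodule.add_mem _ h1 h2
        convert this using 1
        funext h
        simp [add_mul]
      | smul c F _ h1 =>
        have := Submodule.smul_mem _ c h1
        convert this using 1
        funext h
        simp
    have h1 := key _ ih
    have h2 : (fun h => σ h [σ p.1 p.2].prod * (L.map Prod.snd).prod) ∈
        mixM K σ V (L.length + 1) :=
      Submodule.subset_span ⟨[σ p.1 p.2], L.map Prod.snd, by simpa using hgp, hLV, by simp,
        by simp; omega, rfl⟩
    have h3 := Submodule.sub_mem _ h1 (Submodule.smul_mem _ ((-1 : K) ^ (L.map Prod.snd).length) h2)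
    rw [List.length_append, List.length_singleton]
    convert h3 using 1
    funext h
    simp only [Pi.sub_apply, Pi.smul_apply, List.map_append, List.prod_append, List.prod_singleton,
      List.map_cons, List.map_nil]
    have := anti_prod (K := K) V hV _ (hσ h _ hgp) _ hLV
    rw [← this, hm, sub_mul, mul_sub, mul_sub]
    abel

theorem noether_step [CharZero K] (σ : G → E →ₐ[K] E)
    (hm : ∀ g h x, σ (g * h) x = σ g (σ h x)) (h1 : ∀ x, σ 1 x = x)
    (V : Set E) (hV : ∀ a ∈ V, ∀ b ∈ V, a * b = -(b * a)) (hσ : ∀ g, ∀ v ∈ V, σ g v ∈ V)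
    (A : Subalgebra K E)
    (hA : ∀ l : List E, (∀ v ∈ l, v ∈ V) → l.length ≤ Fintype.card G → trE σ l.prod ∈ A) :
    ∀ n : ℕ, ∀ l : List E, (∀ v ∈ l, v ∈ V) → l.length = n → trE σ l.prod ∈ A := by
  intro n
  induction n using Nat.strong_induction_on with
  | _ n ih =>
  intro l hl hn
  by_cases hle : l.length ≤ Fintype.card G
  · exact hA l hl hle
  push Not at hle
  set t := Fintype.card G with ht
  set y := l.take t with hy
  set z := l.drop t with hz
  have hyl : y.length = t := by simp [hy]; omega
  have hzl : z.length = n - t := by simp [hz, hn]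
  have hyz : l.prod = y.prod * z.prod := by rw [← List.prod_append, List.take_append_drop]
  have hyV : ∀ v ∈ y, v ∈ V := fun v hv => hl v (List.mem_of_mem_take hv)
  have hzV : ∀ v ∈ z, v ∈ V := fun v hv => hl v (List.mem_of_mem_drop hv)
  set U := (Finset.univ : Finset G).toList with hU
  have hUl : U.length = t := by simp [hU, ht]
  set L := U.zip y with hLdef
  have hL1 : L.map Prod.fst = U := by
    rw [hLdef]; exact List.map_fst_zip (by omega)
  have hL2 : L.map Prod.snd = y := by
    rw [hLdef]; exact List.map_snd_zip (by omega)
  have hLl : L.length = t := by rw [← hUl, ← hL1, List.length_map]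
  have hLV : ∀ p ∈ L, p.2 ∈ V := fun p hp => hyV _ (hL2 ▸ List.mem_map_of_mem hp)
  have hmem := expand_mem σ hm V hV hσ L hLV
  have hzero : ∀ h : G, (L.map (fun p => p.2 - σ (h * p.1) p.2)).prod = 0 := by
    intro h
    have : h⁻¹ ∈ L.map Prod.fst := by rw [hL1]; simp [hU]
    obtain ⟨p, hp, hp'⟩ := List.mem_map.1 this
    apply List.prod_eq_zero
    rw [List.mem_map]
    refine ⟨p, hp, ?_⟩
    rw [hp', mul_inv_cancel, h1, sub_self]
  simp_rw [hzero, hL2, zero_sub, hLl] at hmem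
  have key : ∀ F ∈ mixM K σ V t, trE σ ((∑ h, F h) * z.prod) ∈ A := by
    intro F hF
    induction hF using Submodule.span_induction with
    | mem F hF =>
      obtain ⟨l₁, l₂, a1, a2, a3, a4, rfl⟩ := hF
      rw [← Finset.sum_mul, ← trE_apply, mul_assoc, trE_mul σ hm, ← List.prod_append]
      refine A.mul_mem (hA l₁ a1 (by omega)) (ih (l₂ ++ z).length ?_ _ ?_ rfl)
      · rw [List.length_append]; omega
      · intro v hv
        rcases List.mem_append.1 hv with hv | hv
        · exact a2 v hv
        · exact hzV v hv
    | zero => simp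
    | add F F' _ _ b1 b2 =>
      simpa [Finset.sum_add_distrib, add_mul] using A.add_mem b1 b2
    | smul c F _ b1 =>
      simpa [← Finset.smul_sum] using A.smul_mem b1 c
  have := key _ hmem
  rw [Finset.sum_const, Finset.card_univ, ← ht, smul_mul_assoc,
    neg_mul, ← hyz, ← Nat.cast_smul_eq_nsmul K, map_smul, map_neg] at this
  have ht0 : (t : K) ≠ 0 := by
    rw [ht]; exact_mod_cast Fintype.card_ne_zero
  have h5 := A.smul_mem this (-(t : K)⁻¹)
  rwa [smul_neg, smul_neg, neg_smul, neg_neg, inv_smul_smul₀ ht0] at h5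

end NoetherPart

section PolPart

variable {K : Type*} [Field K] {E : Type*} [Ring E] [Algebra K E]

open Polynomial in
theorem poly_list (l : List (E × E)) : ∀ ψ : E →ₗ[K] K,
    ∃ q : K[X], ∀ c : K, ψ ((l.map (fun p => p.1 + c • p.2)).prod) = q.eval c := by
  induction l with
  | nil => intro ψ; exact ⟨C (ψ 1), by simp⟩
  | cons p l ih =>
    intro ψ
    obtain ⟨q₁, h₁⟩ := ih (ψ ∘ₗ LinearMap.mulLeft K p.1)
    obtain ⟨q₂, h₂⟩ := ih (ψ ∘ₗ LinearMap.mulLeft K p.2)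
    refine ⟨q₁ + X * q₂, fun c => ?_⟩
    have e1 := h₁ c
    have e2 := h₂ c
    simp only [LinearMap.comp_apply, LinearMap.mulLeft_apply] at e1 e2
    simp [add_mul, e1, e2]

variable {W : Type*} [AddCommGroup W] [Module K W]

theorem map_list {m n : ℕ} (f : W →ₗ[K] W) (φ : (Fin m → K) →ₗ[K] (Fin n → K))
    (l : List (W × (Fin m → K))) :
    ExteriorAlgebra.map (TensorProduct.map f φ)
      (l.map (fun p => ExteriorAlgebra.ι K (p.1 ⊗ₜ[K] p.2))).prod =
      (l.map (fun p => ExteriorAlgebra.ι K (f p.1 ⊗ₜ[K] φ p.2))).prod := by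
  rw [map_list_prod, List.map_map]
  congr 1
  apply List.map_congr_left
  intro p _
  simp

theorem span_lists (m : ℕ) (x : ExteriorAlgebra K (TensorProduct K W (Fin m → K))) :
    x ∈ Submodule.span K (Set.range (fun l : List (W × (Fin m → K)) =>
      (l.map (fun p => ExteriorAlgebra.ι K (p.1 ⊗ₜ[K] p.2))).prod)) := by
  set M := Submodule.span K (Set.range (fun l : List (W × (Fin m → K)) =>
      (l.map (fun p => ExteriorAlgebra.ι K (p.1 ⊗ₜ[K] p.2))).prod)) with hM
  have hmul : ∀ a ∈ M, ∀ b ∈ M, a * b ∈ M := by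
    intro a ha b hb
    have := Submodule.mul_mem_mul ha hb
    rw [hM, Submodule.span_mul_span] at this
    refine Submodule.span_mono ?_ this
    rintro _ ⟨_, ⟨l, rfl⟩, _, ⟨l', rfl⟩, rfl⟩
    exact ⟨l ++ l', by simp⟩
  have h1 : (1 : ExteriorAlgebra K (TensorProduct K W (Fin m → K))) ∈ M :=
    Submodule.subset_span ⟨[], by simp⟩
  induction x using ExteriorAlgebra.induction with
  | algebraMap c => rw [Algebra.algebraMap_eq_smul_one]; exact M.smul_mem c h1
  | ι v =>
    induction v using TensorProduct.induction_on with
    | zero => simp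
    | tmul w u => exact Submodule.subset_span ⟨[(w, u)], by simp⟩
    | add a b ha hb => rw [map_add]; exact M.add_mem ha hb
  | mul a b ha hb => exact hmul a ha b hb
  | add a b ha hb => exact M.add_mem ha hb

open Polynomial in
theorem mat_mem [CharZero K] (r : ℕ)
    (A : Submodule K (ExteriorAlgebra K (TensorProduct K W (Fin r → K))))
    (y : ExteriorAlgebra K (TensorProduct K W (Fin r → K)))
    (hy : ∀ B : Matrix.GeneralLinearGroup (Fin r) K, extGLAct K W r B y ∈ A)
    (B : Matrix (Fin r) (Fin r) K) :
    ExteriorAlgebra.map (TensorProduct.map LinearMap.id (Matrix.toLin' B)) y ∈ A := by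
  by_contra hcon
  obtain ⟨ψ, hψ, hψA⟩ := Submodule.exists_le_ker_of_notMem hcon
  have hpoly : ∀ y : ExteriorAlgebra K (TensorProduct K W (Fin r → K)), ∃ q : K[X], ∀ c : K,
      ψ (ExteriorAlgebra.map (TensorProduct.map LinearMap.id
        (Matrix.toLin' (B + c • (1 : Matrix (Fin r) (Fin r) K)))) y) = q.eval c := by
    intro y
    have := span_lists r y
    induction this using Submodule.span_induction with
    | mem x hx =>
      obtain ⟨l, rfl⟩ := hx
      obtain ⟨q, hq⟩ := poly_list (l.map (fun p =>
        (ExteriorAlgebra.ι K (p.1 ⊗ₜ[K] (Matrix.toLin' B p.2)),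
          ExteriorAlgebra.ι K (p.1 ⊗ₜ[K] p.2)))) ψ
      refine ⟨q, fun c => ?_⟩
      rw [← hq c, map_list, List.map_map]
      congr 3
      funext p
      simp [Matrix.add_mulVec, Matrix.smul_mulVec, TensorProduct.tmul_add]
    | zero => exact ⟨0, by simp⟩
    | add a b _ _ ha hb =>
      obtain ⟨q₁, h₁⟩ := ha
      obtain ⟨q₂, h₂⟩ := hb
      exact ⟨q₁ + q₂, fun c => by rw [map_add, map_add, h₁, h₂, eval_add]⟩
    | smul k a _ ha =>
      obtain ⟨q₁, h₁⟩ := ha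
      exact ⟨C k * q₁, fun c => by rw [map_smul, map_smul, h₁, eval_mul, eval_C, smul_eq_mul]⟩
  obtain ⟨q, hq⟩ := hpoly y
  have hz : q * (-B).charpoly = 0 := by
    apply Polynomial.funext
    intro c
    rw [eval_mul, eval_zero, Matrix.eval_charpoly]
    have he : (Matrix.scalar (Fin r)) c - -B = B + c • (1 : Matrix (Fin r) (Fin r) K) := by
      rw [sub_neg_eq_add, add_comm, Matrix.smul_one_eq_diagonal]; rfl
    rw [he]
    by_cases hd : (B + c • (1 : Matrix (Fin r) (Fin r) K)).det = 0
    · rw [hd, mul_zero]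
    · have := hψA (hy (Matrix.GeneralLinearGroup.mkOfDetNeZero _ hd))
      rw [LinearMap.mem_ker] at this
      rw [← hq c]
      have h2 : ψ (ExteriorAlgebra.map (TensorProduct.map LinearMap.id
        (Matrix.toLin' (B + c • (1 : Matrix (Fin r) (Fin r) K)))) y) = 0 := this
      rw [h2, zero_mul]
  have hq0 : q = 0 := (mul_eq_zero.1 hz).resolve_right (Matrix.charpoly_monic _).ne_zero
  apply hψ
  have := hq 0
  rw [hq0] at this
  simpa using this

theorem gact_comm {G : Type*} [Group G] (ρ : Representation K G W) {m n : ℕ}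
    (φ : (Fin m → K) →ₗ[K] (Fin n → K)) (g : G)
    (x : ExteriorAlgebra K (TensorProduct K W (Fin m → K))) :
    extGAct K ρ n g (ExteriorAlgebra.map (TensorProduct.map LinearMap.id φ) x) =
      ExteriorAlgebra.map (TensorProduct.map LinearMap.id φ) (extGAct K ρ m g x) := by
  unfold extGAct
  rw [← AlgHom.comp_apply, ← AlgHom.comp_apply, ExteriorAlgebra.map_comp_map,
    ExteriorAlgebra.map_comp_map, ← TensorProduct.map_comp, ← TensorProduct.map_comp]
  rfl

theorem gact_mul {G : Type*} [Group G] (ρ : Representation K G W) (m : ℕ) (g h : G)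
    (x : ExteriorAlgebra K (TensorProduct K W (Fin m → K))) :
    extGAct K ρ m (g * h) x = extGAct K ρ m g (extGAct K ρ m h x) := by
  unfold extGAct
  rw [← AlgHom.comp_apply, ExteriorAlgebra.map_comp_map, ← TensorProduct.map_comp, map_mul]
  rfl

theorem gact_one {G : Type*} [Group G] (ρ : Representation K G W) (m : ℕ)
    (x : ExteriorAlgebra K (TensorProduct K W (Fin m → K))) :
    extGAct K ρ m 1 x = x := by
  unfold extGAct
  rw [map_one]
  erw [TensorProduct.map_id, ExteriorAlgebra.map_id]
  rfl

theorem exists_fac (s r : ℕ) (hr : s ≤ r) (v : Fin s → (Fin r → K)) :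
    ∃ B : Matrix (Fin r) (Fin r) K, ∀ i : Fin s,
      Matrix.toLin' B (stdIncl K s r hr (Pi.single i 1)) = v i := by
  refine ⟨Matrix.of (fun a b => if h : b.1 < s then v ⟨b.1, h⟩ a else 0), fun i => ?_⟩
  have : stdIncl K s r hr (Pi.single i 1) = Pi.single (Fin.castLE hr i) 1 := by
    unfold stdIncl
    rw [LinearMap.sum_apply, Finset.sum_eq_single i]
    · simp
    · intro j _ hj
      simp [hj]
    · simp
  rw [this]
  ext a
  simp

end PolPart

/-- **Polarization for the exterior algebra.**
Let `G` be a finite group acting on the finite-dimensional vector space `W`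
over a field of characteristic zero, `t = |G|`, and `r ≥ s ≥ t`.  If
`S ⊆ Λ(W ⊗ K^s)^G` generates `Λ(W ⊗ K^s)^G` as a `K`-algebra, then the
polarized set `{B · f : f ∈ S, B ∈ GL_r(K)}` generates `Λ(W ⊗ K^r)^G` as a
`K`-algebra. -/
theorem polarization_exterior_algebra
    (K : Type*) [Field K] [CharZero K]
    (G : Type*) [Group G] [Fintype G]
    (W : Type*) [AddCommGroup W] [Module K W] [FiniteDimensional K W]
    (ρ : Representation K G W)
    (s r : ℕ) (hs : Fintype.card G ≤ s) (hr : s ≤ r)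
    (S : Set (ExteriorAlgebra K (TensorProduct K W (Fin s → K))))
    (hSinv : ∀ f ∈ S, ∀ g : G, extGAct K ρ s g f = f)
    (hSgen : ∀ x : ExteriorAlgebra K (TensorProduct K W (Fin s → K)),
      x ∈ Algebra.adjoin K S ↔ ∀ g : G, extGAct K ρ s g x = x) :
    ∀ x : ExteriorAlgebra K (TensorProduct K W (Fin r → K)),
      x ∈ Algebra.adjoin K
          {e | ∃ f ∈ S, ∃ B : Matrix.GeneralLinearGroup (Fin r) K,
            e = extGLAct K W r B (extIncl K W s r hr f)}
        ↔ ∀ g : G, extGAct K ρ r g x = x := by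
  have hmulr := gact_mul ρ r
  have honer := gact_one ρ r
  have hmuls := gact_mul ρ s
  intro x
  set A := Algebra.adjoin K
          {e | ∃ f ∈ S, ∃ B : Matrix.GeneralLinearGroup (Fin r) K,
            e = extGLAct K W r B (extIncl K W s r hr f)} with hAdef
  constructor
  · intro hx g
    induction hx using Algebra.adjoin_induction with
    | mem x hx =>
      obtain ⟨f, hf, B, rfl⟩ := hx
      unfold extGLAct extIncl
      rw [gact_comm, gact_comm, hSinv f hf g]
    | algebraMap c => simp
    | add a b _ _ ha hb => rw [map_add, ha, hb]
    | mul a b _ _ ha hb => rw [map_mul, ha, hb]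
  · intro hx
    -- all matrices
    have hmat : ∀ u, (∀ g : G, extGAct K ρ s g u = u) → ∀ B : Matrix (Fin r) (Fin r) K,
        ExteriorAlgebra.map (TensorProduct.map LinearMap.id (Matrix.toLin' B))
          (extIncl K W s r hr u) ∈ A := by
      intro u hu B
      have hu' := (hSgen u).2 hu
      have hle : Algebra.adjoin K S ≤ A.comap
          ((ExteriorAlgebra.map (TensorProduct.map LinearMap.id (Matrix.toLin' B))).comp
            (extIncl K W s r hr)) := by
        apply Algebra.adjoin_le
        intro f hf
        exact mat_mem r (Subalgebra.toSubmodule A) _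
          (fun B' => Algebra.subset_adjoin ⟨f, hf, B', rfl⟩) B
      exact hle hu'
    set V : Set (ExteriorAlgebra K (TensorProduct K W (Fin r → K))) :=
      Set.range (fun p : W × (Fin r → K) => ExteriorAlgebra.ι K (p.1 ⊗ₜ[K] p.2)) with hVdef
    have hV : ∀ a ∈ V, ∀ b ∈ V, a * b = -(b * a) := by
      rintro _ ⟨p, rfl⟩ _ ⟨q, rfl⟩
      exact eq_neg_of_add_eq_zero_left (ExteriorAlgebra.ι_add_mul_swap _ _)
    have hσ : ∀ g, ∀ v ∈ V, extGAct K ρ r g v ∈ V := by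
      rintro g _ ⟨p, rfl⟩
      exact ⟨(ρ g p.1, p.2), by simp [extGAct]⟩
    have hbase : ∀ l : List (ExteriorAlgebra K (TensorProduct K W (Fin r → K))),
        (∀ v ∈ l, v ∈ V) → l.length ≤ Fintype.card G → trE (extGAct K ρ r) l.prod ∈ A := by
      intro l hl hlen
      have hl' : l ∈ Set.range (List.map
          (fun p : W × (Fin r → K) => ExteriorAlgebra.ι K (p.1 ⊗ₜ[K] p.2))) := by
        rw [Set.range_list_map]; exact hl
      obtain ⟨l', rfl⟩ := hl'
      rw [List.length_map] at hlen
      have hlens : l'.length ≤ s := hlen.trans hs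
      obtain ⟨B, hB⟩ := exists_fac (K := K) s r hr
        (fun i => if h : i.1 < l'.length then (l'[i.1]'h).2 else 0)
      let l₀ : List (W × (Fin s → K)) := List.ofFn (fun i : Fin l'.length =>
        ((l'[i.1]).1, Pi.single (Fin.castLE hlens i) (1 : K)))
      let P := (l₀.map (fun p => ExteriorAlgebra.ι K (p.1 ⊗ₜ[K] p.2))).prod
      have hP := hmat (trE (extGAct K ρ s) P) (fun g => act_trE _ hmuls g P) B
      convert hP using 1
      unfold extIncl
      rw [trE_apply, trE_apply, map_sum, map_sum]
      refine Finset.sum_congr rfl (fun g _ => ?_)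
      rw [← gact_comm, ← gact_comm]
      congr 1
      rw [map_list]
      have := map_list (K := K) (W := W) LinearMap.id (Matrix.toLin' B)
        (l₀.map (fun p => (p.1, stdIncl K s r hr p.2)))
      rw [List.map_map, List.map_map] at this
      refine Eq.trans ?_ this.symm
      congr 1
      apply List.ext_getElem
      · simp [l₀]
      · intro i h1 h2
        have hi : i < l'.length := by simpa using h1
        have := hB ⟨i, hi.trans_le hlens⟩
        simp only [hi, dif_pos] at this
        simp only [l₀, List.getElem_map, List.getElem_ofFn, Function.comp, LinearMap.id_apply]
        rw [← this]
        rfl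
    have hall := noether_step (extGAct K ρ r) hmulr honer V hV hσ A hbase
    have htr : ∀ y, trE (extGAct K ρ r) y ∈ A := by
      intro y
      have := span_lists r y
      induction this using Submodule.span_induction with
      | mem y hy =>
        obtain ⟨l, rfl⟩ := hy
        refine hall _ _ ?_ rfl
        intro v hv
        obtain ⟨p, _, rfl⟩ := List.mem_map.1 hv
        exact ⟨p, rfl⟩
      | zero => simp
      | add a b _ _ ha hb => rw [map_add]; exact A.add_mem ha hb
      | smul c a _ ha => rw [map_smul]; exact A.smul_mem ha c
    have h1 := A.smul_mem (htr x) ((Fintype.card G : K)⁻¹)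
    rw [trE_apply] at h1
    simp_rw [hx] at h1
    rw [Finset.sum_const, Finset.card_univ, ← Nat.cast_smul_eq_nsmul K, inv_smul_smul₀] at h1
    · exact h1
    · exact_mod_cast Fintype.card_ne_zero
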